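/- In the exponential case, the indifference premium satisfies the dynamic programming property H_t(Z) = H_t(H_{t+τ}(Z)) a.s. for all Z ∈ L^∞_T, t = 0,…,T−τ and τ = 1,…,T. -/

import Mathlib

open MeasureTheory Filter

variable {Ω : Type*}

/-- `X ∈ L^∞(m)`: `m`-measurable and (essentially) bounded. -/
def MeasBdd (m : MeasurableSpace Ω) (X : Ω → ℝ) : Prop :=
  Measurable[m] X ∧ ∃ C : ℝ, ∀ ω, |X ω| ≤ C

/-- `u` is a utility function (strictly increasing, strictly concave, `C¹`) with
derivative `u'` satisfying `u 0 = 0`, `u' 0 = 1`, `u'(+∞) = 0`, `u'(-∞) = +∞`. -/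
structure IsUtility (u u' : ℝ → ℝ) : Prop where
  strictMono : StrictMono u
  strictConcave : StrictConcaveOn ℝ Set.univ u
  hasDeriv : ∀ x, HasDerivAt u (u' x) x
  derivCont : Continuous u'
  zero : u 0 = 0
  deriv_zero : u' 0 = 1
  deriv_top : Tendsto u' atTop (nhds 0)
  deriv_bot : Tendsto u' atBot atTop

/-- A one-product diversification of `Z` at time `t`: an adapted family `(X s)`,
`s = t,…,T`, of essentially bounded random variables summing to `Z`. -/
def IsDiv1 {m0 : MeasurableSpace Ω} (P : Measure Ω) (ℱ : Filtration ℕ m0)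
    (t T : ℕ) (Z : Ω → ℝ) (X : ℕ → Ω → ℝ) : Prop :=
  (∀ s ∈ Finset.Icc t T, MeasBdd (ℱ s) (X s)) ∧
  ∀ᵐ ω ∂P, (∑ s ∈ Finset.Icc t T, X s ω) = Z ω

/-- The total conditional expected utility `∑_{s=t}^T E[u_s(X_s) | 𝓕_t]`. -/
noncomputable def utilSum1 {m0 : MeasurableSpace Ω} (P : Measure Ω) (ℱ : Filtration ℕ m0)
    (u : ℕ → ℝ → ℝ) (t T : ℕ) (X : ℕ → Ω → ℝ) : Ω → ℝ :=
  fun ω => ∑ s ∈ Finset.Icc t T, (P[fun ω' => u s (X s ω') | ℱ t]) ω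

/-- `g` is an essential supremum of the family `S` of random variables under `P`. -/
def IsEssSupOf {m0 : MeasurableSpace Ω} (P : Measure Ω) (S : Set (Ω → ℝ)) (g : Ω → ℝ) : Prop :=
  (∀ f ∈ S, f ≤ᵐ[P] g) ∧ ∀ h : Ω → ℝ, (∀ f ∈ S, f ≤ᵐ[P] h) → g ≤ᵐ[P] h

/-- `g` is an essential infimum of the family `S` of random variables under `P`. -/
def IsEssInfOf {m0 : MeasurableSpace Ω} (P : Measure Ω) (S : Set (Ω → ℝ)) (g : Ω → ℝ) : Prop :=
  (∀ f ∈ S, g ≤ᵐ[P] f) ∧ ∀ h : Ω → ℝ, (∀ f ∈ S, h ≤ᵐ[P] f) → h ≤ᵐ[P] g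

/-!
Exponential utilities are closed under sup-convolution: if `1/c = 1/a + 1/b`, then
`u_a x + u_b y ≤ u_c (x + y)`, with equality when `a x = b y`. Backward induction over time
therefore gives `U_t(W) = u_{β_t}(C_t(W))`, where `C_T(W) = W` and `C_t(W)` is the conditional
certainty equivalent of `C_{t+1}(W)` given `𝓕_t` for the risk aversion `β_{t+1}`. Since `C_t` is
additive in `𝓕_t`-measurable shifts, `H_t(Z) = -C_t(-Z)`, and the dynamic programming property of
`H` is the tower property `C_t(C_r(W)) = C_t(W)`, which is built into the recursion.
-/

namespace MeasBdd

variable {m m' : MeasurableSpace Ω} {X Y : Ω → ℝ}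

lemma mono (hm : m ≤ m') (hX : MeasBdd m X) : MeasBdd m' X :=
  ⟨hX.1.mono hm le_rfl, hX.2⟩

lemma const (c : ℝ) : MeasBdd m (fun _ : Ω => c) :=
  ⟨measurable_const, |c|, fun _ => le_rfl⟩

lemma comp₂ {f : ℝ → ℝ → ℝ} (hf : Continuous (Function.uncurry f))
    (hX : MeasBdd m X) (hY : MeasBdd m Y) : MeasBdd m (fun ω => f (X ω) (Y ω)) := by
  obtain ⟨hX, C, hC⟩ := hX
  obtain ⟨hY, D, hD⟩ := hY
  obtain ⟨B, hB⟩ := (isCompact_Icc.prod isCompact_Icc).exists_bound_of_continuousOn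
    (s := Set.Icc (-C) C ×ˢ Set.Icc (-D) D) hf.continuousOn
  exact ⟨hf.measurable.comp (hX.prodMk hY), B,
    fun ω => hB (X ω, Y ω) ⟨abs_le.mp (hC ω), abs_le.mp (hD ω)⟩⟩

lemma comp {f : ℝ → ℝ} (hf : Continuous f) (hX : MeasBdd m X) : MeasBdd m (fun ω => f (X ω)) :=
  comp₂ (f := fun x _ => f x) (hf.comp continuous_fst) hX hX

lemma add (hX : MeasBdd m X) (hY : MeasBdd m Y) : MeasBdd m (fun ω => X ω + Y ω) :=
  comp₂ (f := fun x y => x + y) continuous_add hX hY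

lemma sub (hX : MeasBdd m X) (hY : MeasBdd m Y) : MeasBdd m (fun ω => X ω - Y ω) :=
  comp₂ (f := fun x y => x - y) continuous_sub hX hY

lemma mul (hX : MeasBdd m X) (hY : MeasBdd m Y) : MeasBdd m (fun ω => X ω * Y ω) :=
  comp₂ (f := fun x y => x * y) continuous_mul hX hY

lemma neg (hX : MeasBdd m X) : MeasBdd m (fun ω => -X ω) :=
  hX.comp continuous_neg

lemma const_mul (c : ℝ) (hX : MeasBdd m X) : MeasBdd m (fun ω => c * X ω) :=
  hX.comp (continuous_const_mul c)

lemma exp (hX : MeasBdd m X) : MeasBdd m (fun ω => Real.exp (X ω)) :=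
  hX.comp Real.continuous_exp

lemma integrable {P : Measure[m] Ω} [IsFiniteMeasure P] (hX : MeasBdd m X) : Integrable X P := by
  obtain ⟨hX, C, hC⟩ := hX
  exact Integrable.of_bound hX.aestronglyMeasurable C (Eventually.of_forall hC)

lemma condExp_eq {P : Measure[m'] Ω} [IsFiniteMeasure P] (hm : m ≤ m') (hX : MeasBdd m X) :
    P[X | m] = X :=
  condExp_of_stronglyMeasurable hm hX.1.stronglyMeasurable (hX.mono hm).integrable

end MeasBdd

section ExpUtility

variable {a b c : ℝ}

/-- The exponential utility function with constant absolute risk aversion `a`. -/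
noncomputable def expUtility (a x : ℝ) : ℝ := a⁻¹ * (1 - Real.exp (-a * x))

lemma continuous_expUtility (a : ℝ) : Continuous (expUtility a) := by
  unfold expUtility
  fun_prop

lemma strictMono_expUtility (ha : 0 < a) : StrictMono (expUtility a) := by
  intro x y hxy
  have hexp : Real.exp (-a * y) < Real.exp (-a * x) :=
    Real.exp_lt_exp.mpr (mul_lt_mul_of_neg_left hxy (neg_lt_zero.mpr ha))
  exact mul_lt_mul_of_pos_left (sub_lt_sub_left hexp 1) (inv_pos.mpr ha)

lemma expUtility_add_le (ha : 0 < a) (hb : 0 < b) (hc : c⁻¹ = a⁻¹ + b⁻¹) (x y : ℝ) :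
    expUtility a x + expUtility b y ≤ expUtility c (x + y) := by
  have hc_pos : 0 < c := inv_pos.mp (hc ▸ by positivity)
  have hweights : c * a⁻¹ + c * b⁻¹ = 1 := by rw [← mul_add, ← hc, mul_inv_cancel₀ hc_pos.ne']
  have hjensen := convexOn_exp.2 (Set.mem_univ (-a * x)) (Set.mem_univ (-b * y))
    (by positivity : 0 ≤ c * a⁻¹) (by positivity : 0 ≤ c * b⁻¹) hweights
  have hmean : (c * a⁻¹) • (-a * x) + (c * b⁻¹) • (-b * y) = -c * (x + y) := by
    simp only [smul_eq_mul]
    field_simp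
    ring
  rw [hmean] at hjensen
  calc expUtility a x + expUtility b y
      = c⁻¹ - c⁻¹ * ((c * a⁻¹) • Real.exp (-a * x) + (c * b⁻¹) • Real.exp (-b * y)) := by
        simp only [expUtility, smul_eq_mul, mul_add, ← mul_assoc, inv_mul_cancel₀ hc_pos.ne',
          one_mul]
        rw [hc]
        ring
    _ ≤ c⁻¹ - c⁻¹ * Real.exp (-c * (x + y)) :=
        sub_le_sub_left (mul_le_mul_of_nonneg_left hjensen (inv_pos.mpr hc_pos).le) _
    _ = expUtility c (x + y) := by rw [expUtility, mul_sub, mul_one]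

lemma expUtility_mul_add_expUtility_sub (ha : 0 < a) (hb : 0 < b) (hc : c⁻¹ = a⁻¹ + b⁻¹) (x : ℝ) :
    expUtility a (c * a⁻¹ * x) + expUtility b (x - c * a⁻¹ * x) = expUtility c x := by
  have hc_pos : 0 < c := inv_pos.mp (hc ▸ by positivity)
  have hweights : c * a⁻¹ + c * b⁻¹ = 1 := by rw [← mul_add, ← hc, mul_inv_cancel₀ hc_pos.ne']
  have hshare : x - c * a⁻¹ * x = c * b⁻¹ * x := by linear_combination -x * hweights
  have hexponent_a : -a * (c * a⁻¹ * x) = -c * x := by field_simp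
  have hexponent_b : -b * (c * b⁻¹ * x) = -c * x := by field_simp
  rw [hshare, expUtility, expUtility, expUtility, hexponent_a, hexponent_b, hc, add_mul]

end ExpUtility

section CondCertEquiv

variable {m m0 : MeasurableSpace Ω} {P : Measure Ω} {b C : ℝ} {K Y Y' R : Ω → ℝ}

/-- The conditional certainty equivalent `-b⁻¹ log E[exp(-b Y) | m]` of `Y` for the exponential
utility with risk aversion `b`. The truncation to `[-sup |Y|, sup |Y|]` is almost surely inactive
for bounded `Y`; it selects a version that is bounded everywhere, as `MeasBdd` demands. -/
noncomputable def condCertEquiv {_ : MeasurableSpace Ω} (P : Measure Ω) (m : MeasurableSpace Ω)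
    (b : ℝ) (Y : Ω → ℝ) : Ω → ℝ := fun ω =>
  max (-⨆ ω', |Y ω'|)
    (min (-b⁻¹ * Real.log ((P[fun ω' => Real.exp (-b * Y ω') | m]) ω)) (⨆ ω', |Y ω'|))

lemma measBdd_condCertEquiv : MeasBdd m (condCertEquiv P m b Y) := by
  have hsup : 0 ≤ ⨆ ω', |Y ω'| := Real.iSup_nonneg fun _ => abs_nonneg _
  refine ⟨?_, ⨆ ω', |Y ω'|, fun ω => abs_le.mpr ⟨le_max_left _ _, ?_⟩⟩
  · exact measurable_const.max
      ((stronglyMeasurable_condExp.measurable.log.const_mul _).min measurable_const)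
  · exact max_le (neg_le_self hsup) (min_le_right _ _)

variable [IsFiniteMeasure P]

lemma abs_log_condExp_exp_le (hm : m ≤ m0) (hY : MeasBdd m0 Y) (hC : ∀ ω, |Y ω| ≤ C) :
    ∀ᵐ ω ∂P, 0 < (P[fun ω' => Real.exp (Y ω') | m]) ω ∧
      |Real.log ((P[fun ω' => Real.exp (Y ω') | m]) ω)| ≤ C := by
  have hlower := condExp_mono (μ := P) (m := m) (integrable_const (Real.exp (-C)))
    hY.exp.integrable (Eventually.of_forall fun ω => Real.exp_le_exp.mpr (abs_le.mp (hC ω)).1)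
  have hupper := condExp_mono (μ := P) (m := m) hY.exp.integrable
    (integrable_const (Real.exp C))
    (Eventually.of_forall fun ω => Real.exp_le_exp.mpr (abs_le.mp (hC ω)).2)
  rw [condExp_const hm] at hlower hupper
  filter_upwards [hlower, hupper] with ω hlower hupper
  have hpos := (Real.exp_pos (-C)).trans_le hlower
  exact ⟨hpos, abs_le.mpr
    ⟨(Real.le_log_iff_exp_le hpos).mpr hlower, (Real.log_le_iff_le_exp hpos).mpr hupper⟩⟩

lemma exp_condCertEquiv (hm : m ≤ m0) (hb : b ≠ 0) (hY : MeasBdd m0 Y) :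
    (fun ω => Real.exp (-b * condCertEquiv P m b Y ω)) =ᵐ[P]
      P[fun ω => Real.exp (-b * Y ω) | m] := by
  obtain ⟨C, hC⟩ := hY.2
  have hsup : ∀ ω, |Y ω| ≤ ⨆ ω', |Y ω'| := le_ciSup ⟨C, Set.forall_mem_range.mpr hC⟩
  have hbound : ∀ ω, |-b * Y ω| ≤ |b| * ⨆ ω', |Y ω'| := fun ω => by
    rw [abs_mul, abs_neg]
    exact mul_le_mul_of_nonneg_left (hsup ω) (abs_nonneg b)
  filter_upwards [abs_log_condExp_exp_le (P := P) hm (hY.const_mul (-b)) hbound]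
    with ω ⟨hpos, hlog⟩
  have habs : |-b⁻¹ * Real.log ((P[fun ω' => Real.exp (-b * Y ω') | m]) ω)| ≤ ⨆ ω', |Y ω'| := by
    rw [abs_mul, abs_neg, abs_inv]
    exact (inv_mul_le_iff₀ (abs_pos.mpr hb)).mpr hlog
  rw [condCertEquiv, min_eq_left (abs_le.mp habs).2, max_eq_right (abs_le.mp habs).1,
    neg_mul_comm, neg_mul, neg_neg, mul_inv_cancel_left₀ hb, Real.exp_log hpos]

lemma condCertEquiv_ae_eq_iff (hm : m ≤ m0) (hb : b ≠ 0) (hY : MeasBdd m0 Y) :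
    condCertEquiv P m b Y =ᵐ[P] R ↔
      P[fun ω => Real.exp (-b * Y ω) | m] =ᵐ[P] fun ω => Real.exp (-b * R ω) := by
  constructor <;> intro h <;> filter_upwards [h, exp_condCertEquiv hm hb hY] with ω h hexp
  · rw [← hexp, h]
  · exact mul_left_cancel₀ (neg_ne_zero.mpr hb) (Real.exp_injective (hexp.trans h))

lemma condCertEquiv_congr_ae (hm : m ≤ m0) (hb : b ≠ 0) (hY : MeasBdd m0 Y) (hY' : MeasBdd m0 Y')
    (h : Y =ᵐ[P] Y') : condCertEquiv P m b Y =ᵐ[P] condCertEquiv P m b Y' := by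
  refine (condCertEquiv_ae_eq_iff hm hb hY).mpr ?_
  exact (condExp_congr_ae (h.fun_comp fun y => Real.exp (-b * y))).trans
    (exp_condCertEquiv hm hb hY').symm

lemma condCertEquiv_of_measBdd (hm : m ≤ m0) (hb : b ≠ 0) (hY : MeasBdd m Y) :
    condCertEquiv P m b Y =ᵐ[P] Y :=
  (condCertEquiv_ae_eq_iff hm hb (hY.mono hm)).mpr
    ((hY.const_mul (-b)).exp.condExp_eq hm).eventuallyEq

lemma condCertEquiv_add (hm : m ≤ m0) (hb : b ≠ 0) (hY : MeasBdd m0 Y) (hK : MeasBdd m K) :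
    condCertEquiv P m b (fun ω => Y ω + K ω) =ᵐ[P] fun ω => condCertEquiv P m b Y ω + K ω := by
  have hexpY := (hY.const_mul (-b)).exp
  have hexpK := (hK.const_mul (-b)).exp
  have hpull := condExp_mul_of_stronglyMeasurable_right (μ := P) hexpK.1.stronglyMeasurable
    (hexpY.mul (hexpK.mono hm)).integrable hexpY.integrable
  refine (condCertEquiv_ae_eq_iff hm hb (hY.add (hK.mono hm))).mpr ?_
  simp only [mul_add, Real.exp_add]
  filter_upwards [hpull, exp_condCertEquiv hm hb hY] with ω hpull hexp
  rw [hexp]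
  exact hpull

lemma condExp_expUtility (hm : m ≤ m0) (hb : b ≠ 0) (hY : MeasBdd m0 Y) :
    P[fun ω => expUtility b (Y ω) | m] =ᵐ[P] fun ω => expUtility b (condCertEquiv P m b Y ω) := by
  have hsmul := condExp_smul (μ := P) b⁻¹ ((fun _ => 1) - fun ω => Real.exp (-b * Y ω)) m
  have hsub := condExp_sub (μ := P) (integrable_const 1) (hY.const_mul (-b)).exp.integrable m
  rw [condExp_const hm] at hsub
  filter_upwards [hsmul, hsub, exp_condCertEquiv hm hb hY] with ω hsmul hsub hexp
  rw [expUtility, hexp]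
  refine hsmul.trans ?_
  rw [Pi.smul_apply, hsub, Pi.sub_apply, smul_eq_mul]

end CondCertEquiv

section CertEquiv

variable {m0 : MeasurableSpace Ω} {P : Measure Ω} {ℱ : Filtration ℕ m0} {β : ℕ → ℝ} {t r T : ℕ}
  {K W W' : Ω → ℝ}

/-- The dynamic certainty equivalent at time `t` of the time-`T` payoff `W`: going backwards from
`T`, the step from `s + 1` to `s` takes the conditional certainty equivalent given `ℱ s` with risk
aversion `β (s + 1)`. -/
noncomputable def certEquiv {m0 : MeasurableSpace Ω} (P : Measure Ω) (ℱ : Filtration ℕ m0)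
    (β : ℕ → ℝ) (T t : ℕ) (W : Ω → ℝ) : Ω → ℝ :=
  if t < T then condCertEquiv P (ℱ t) (β (t + 1)) (certEquiv P ℱ β T (t + 1) W) else W
termination_by T - t

lemma certEquiv_self : certEquiv P ℱ β T T W = W := by
  rw [certEquiv, if_neg (lt_irrefl T)]

lemma certEquiv_of_lt (ht : t < T) : certEquiv P ℱ β T t W =
    condCertEquiv P (ℱ t) (β (t + 1)) (certEquiv P ℱ β T (t + 1) W) := by
  rw [certEquiv, if_pos ht]

lemma measBdd_certEquiv (ht : t ≤ T) (hW : MeasBdd (ℱ T) W) :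
    MeasBdd (ℱ t) (certEquiv P ℱ β T t W) := by
  rcases ht.lt_or_eq with ht | rfl
  · rw [certEquiv_of_lt ht]
    exact measBdd_condCertEquiv
  · rwa [certEquiv_self]

variable [IsFiniteMeasure P]

lemma certEquiv_congr_ae (hβ : ∀ s ≤ T, β s ≠ 0) (ht : t ≤ T) (hW : MeasBdd (ℱ T) W)
    (hW' : MeasBdd (ℱ T) W') (h : W =ᵐ[P] W') :
    certEquiv P ℱ β T t W =ᵐ[P] certEquiv P ℱ β T t W' := by
  induction ht using Nat.decreasingInduction with
  | self => rwa [certEquiv_self, certEquiv_self]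
  | of_succ t ht ih =>
    rw [certEquiv_of_lt ht, certEquiv_of_lt ht]
    exact condCertEquiv_congr_ae (ℱ.le t) (hβ _ ht) ((measBdd_certEquiv ht hW).mono (ℱ.le _))
      ((measBdd_certEquiv ht hW').mono (ℱ.le _)) ih

lemma certEquiv_of_measBdd (hβ : ∀ s ≤ T, β s ≠ 0) (ht : t ≤ T) (hW : MeasBdd (ℱ t) W) :
    certEquiv P ℱ β T t W =ᵐ[P] W := by
  induction ht using Nat.decreasingInduction with
  | self => rw [certEquiv_self]
  | of_succ t ht ih =>
    rw [certEquiv_of_lt ht]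
    have hW_succ : MeasBdd (ℱ (t + 1)) W := hW.mono (ℱ.mono t.le_succ)
    exact (condCertEquiv_congr_ae (ℱ.le t) (hβ _ ht)
      ((measBdd_certEquiv ht (hW_succ.mono (ℱ.mono ht))).mono (ℱ.le _)) (hW.mono (ℱ.le t))
      (ih hW_succ)).trans (condCertEquiv_of_measBdd (ℱ.le t) (hβ _ ht) hW)

lemma certEquiv_add (hβ : ∀ s ≤ T, β s ≠ 0) (ht : t ≤ T) (hW : MeasBdd (ℱ T) W)
    (hK : MeasBdd (ℱ t) K) : certEquiv P ℱ β T t (fun ω => W ω + K ω) =ᵐ[P]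
      fun ω => certEquiv P ℱ β T t W ω + K ω := by
  induction ht using Nat.decreasingInduction with
  | self => rw [certEquiv_self, certEquiv_self]
  | of_succ t ht ih =>
    rw [certEquiv_of_lt ht, certEquiv_of_lt ht]
    have hK_succ : MeasBdd (ℱ (t + 1)) K := hK.mono (ℱ.mono t.le_succ)
    have hC : MeasBdd m0 (certEquiv P ℱ β T (t + 1) W) := (measBdd_certEquiv ht hW).mono (ℱ.le _)
    have hC_add := measBdd_certEquiv (P := P) (β := β) ht (hW.add (hK_succ.mono (ℱ.mono ht)))
    exact (condCertEquiv_congr_ae (ℱ.le t) (hβ _ ht) (hC_add.mono (ℱ.le _))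
      (hC.add (hK.mono (ℱ.le t))) (ih hK_succ)).trans
      (condCertEquiv_add (ℱ.le t) (hβ _ ht) hC hK)

lemma certEquiv_certEquiv (hβ : ∀ s ≤ T, β s ≠ 0) (htr : t ≤ r) (hr : r ≤ T)
    (hW : MeasBdd (ℱ T) W) :
    certEquiv P ℱ β T t (certEquiv P ℱ β T r W) =ᵐ[P] certEquiv P ℱ β T t W := by
  have hC := measBdd_certEquiv (P := P) (β := β) hr hW
  induction htr using Nat.decreasingInduction with
  | self => exact certEquiv_of_measBdd hβ hr hC
  | of_succ t ht ih =>
    have htT := ht.trans_le hr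
    rw [certEquiv_of_lt htT, certEquiv_of_lt htT]
    exact condCertEquiv_congr_ae (ℱ.le t) (hβ _ htT)
      ((measBdd_certEquiv htT (hC.mono (ℱ.mono hr))).mono (ℱ.le _))
      ((measBdd_certEquiv htT hW).mono (ℱ.le _)) ih

lemma condExp_expUtility_certEquiv_sub (hβ : ∀ s ≤ T, β s ≠ 0) (ht : t < T)
    (hW : MeasBdd (ℱ T) W) (hK : MeasBdd (ℱ t) K) :
    P[fun ω => expUtility (β (t + 1)) (certEquiv P ℱ β T (t + 1) (fun ω => W ω - K ω) ω) | ℱ t]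
      =ᵐ[P] fun ω => expUtility (β (t + 1)) (certEquiv P ℱ β T t W ω - K ω) := by
  have hWK := hW.sub (hK.mono (ℱ.mono ht.le))
  have hcond := condExp_expUtility (P := P) (ℱ.le t) (hβ _ ht)
    ((measBdd_certEquiv (P := P) (β := β) ht hWK).mono (ℱ.le _))
  rw [← certEquiv_of_lt ht] at hcond
  filter_upwards [hcond, certEquiv_add hβ ht.le hW hK.neg] with ω hcond hadd
  simp only [sub_eq_add_neg] at hcond ⊢
  rw [hcond, hadd]

end CertEquiv

section Diversification

variable {m0 : MeasurableSpace Ω} {P : Measure Ω} {ℱ : Filtration ℕ m0} {t T : ℕ}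
  {W : Ω → ℝ} {X X' : ℕ → Ω → ℝ} {u : ℕ → ℝ → ℝ}

lemma sum_Icc_eq_add_sum_Icc_succ {M : Type*} [AddCommMonoid M] (ht : t ≤ T) (f : ℕ → M) :
    ∑ s ∈ Finset.Icc t T, f s = f t + ∑ s ∈ Finset.Icc (t + 1) T, f s := by
  rw [← Finset.insert_Icc_add_one_left_eq_Icc ht, Finset.sum_insert (by simp)]

lemma isDiv1_iff_succ (ht : t ≤ T) : IsDiv1 P ℱ t T W X ↔
    MeasBdd (ℱ t) (X t) ∧ IsDiv1 P ℱ (t + 1) T (fun ω => W ω - X t ω) X := by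
  simp only [IsDiv1, sum_Icc_eq_add_sum_Icc_succ ht, eq_sub_iff_add_eq']
  rw [← Finset.insert_Icc_add_one_left_eq_Icc ht, Finset.forall_mem_insert, and_assoc]

lemma IsDiv1.congr (hX : IsDiv1 P ℱ t T W X) (h : ∀ s ∈ Finset.Icc t T, X s = X' s) :
    IsDiv1 P ℱ t T W X' := by
  refine ⟨fun s hs => h s hs ▸ hX.1 s hs, ?_⟩
  filter_upwards [hX.2] with ω hsum
  rw [← hsum]
  exact Finset.sum_congr rfl fun s hs => by rw [h s hs]

lemma utilSum1_congr (h : ∀ s ∈ Finset.Icc t T, X s = X' s) :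
    utilSum1 P ℱ u t T X = utilSum1 P ℱ u t T X' := by
  funext ω
  exact Finset.sum_congr rfl fun s hs => by rw [h s hs]

lemma integrable_utilSum1 : Integrable (utilSum1 P ℱ u t T X) P :=
  integrable_finsetSum _ fun _ _ => integrable_condExp

variable [IsFiniteMeasure P]

lemma utilSum1_self (hu : Continuous (u T)) (hX : MeasBdd (ℱ T) (X T)) :
    utilSum1 P ℱ u T T X = fun ω => u T (X T ω) := by
  funext ω
  rw [utilSum1, Finset.Icc_self, Finset.sum_singleton, (hX.comp hu).condExp_eq (ℱ.le T)]

lemma utilSum1_eq_add_condExp (ht : t ≤ T) (hu : Continuous (u t)) (hX : MeasBdd (ℱ t) (X t)) :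
    utilSum1 P ℱ u t T X =ᵐ[P]
      fun ω => u t (X t ω) + (P[utilSum1 P ℱ u (t + 1) T X | ℱ t]) ω := by
  have hfun : utilSum1 P ℱ u (t + 1) T X =
      ∑ s ∈ Finset.Icc (t + 1) T, P[fun ω => u s (X s ω) | ℱ (t + 1)] := by
    funext ω
    simp [utilSum1]
  have hsum := condExp_finsetSum (μ := P) (s := Finset.Icc (t + 1) T)
    (f := fun s => P[fun ω => u s (X s ω) | ℱ (t + 1)]) (fun _ _ => integrable_condExp) (ℱ t)
  have htower : ∀ᵐ ω ∂P, ∀ s, (P[P[fun ω' => u s (X s ω') | ℱ (t + 1)] | ℱ t]) ω =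
      (P[fun ω' => u s (X s ω') | ℱ t]) ω :=
    ae_all_iff.mpr fun s => condExp_condExp_of_le (ℱ.mono t.le_succ) (ℱ.le _)
  filter_upwards [hsum, htower] with ω hsum htower
  rw [hfun, hsum, Finset.sum_apply, Finset.sum_congr rfl fun s _ => htower s, utilSum1,
    sum_Icc_eq_add_sum_Icc_succ ht, (hX.comp hu).condExp_eq (ℱ.le t)]

end Diversification

section AggregateRiskAversion

variable {α β : ℕ → ℝ} {t T : ℕ}

/-- `β r` is the risk aversion of the agent pooling the utilities with risk aversions
`α r, …, α T`: the risk tolerances `(α s)⁻¹` add up. -/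
def IsAggregateRiskAversion (α β : ℕ → ℝ) (T : ℕ) : Prop :=
  ∀ r ≤ T, (β r)⁻¹ = ∑ s ∈ Finset.Icc r T, (α s)⁻¹

namespace IsAggregateRiskAversion

lemma pos (hβ : IsAggregateRiskAversion α β T) (hα : ∀ s, 0 < α s) (ht : t ≤ T) : 0 < β t :=
  inv_pos.mp (hβ t ht ▸
    Finset.sum_pos (fun s _ => inv_pos.mpr (hα s)) (Finset.nonempty_Icc.mpr ht))

lemma apply_last (hβ : IsAggregateRiskAversion α β T) : β T = α T := by
  simpa using hβ T le_rfl

lemma inv_eq_inv_add_inv_succ (hβ : IsAggregateRiskAversion α β T) (ht : t < T) :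
    (β t)⁻¹ = (α t)⁻¹ + (β (t + 1))⁻¹ := by
  rw [hβ t ht.le, hβ (t + 1) ht, sum_Icc_eq_add_sum_Icc_succ ht.le]

end IsAggregateRiskAversion

end AggregateRiskAversion

section Value

variable {m0 : MeasurableSpace Ω} {P : Measure Ω} [IsFiniteMeasure P] {ℱ : Filtration ℕ m0}
  {α β : ℕ → ℝ} {t T : ℕ} {W V : Ω → ℝ} {X : ℕ → Ω → ℝ}

lemma utilSum1_expUtility_le (hα : ∀ s, 0 < α s) (hβ : IsAggregateRiskAversion α β T)
    (ht : t ≤ T) (hW : MeasBdd (ℱ T) W) (hX : IsDiv1 P ℱ t T W X) :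
    utilSum1 P ℱ (fun s => expUtility (α s)) t T X ≤ᵐ[P]
      fun ω => expUtility (β t) (certEquiv P ℱ β T t W ω) := by
  induction ht using Nat.decreasingInduction generalizing W with
  | self =>
    rw [utilSum1_self (continuous_expUtility _) (hX.1 T (by simp)), certEquiv_self, hβ.apply_last]
    filter_upwards [hX.2] with ω hsum
    rw [← hsum, Finset.Icc_self, Finset.sum_singleton]
  | of_succ t ht ih =>
    have htT : t < T := ht
    obtain ⟨hXt, hX_succ⟩ := (isDiv1_iff_succ htT.le).mp hX
    have hW_sub := hW.sub (hXt.mono (ℱ.mono htT.le))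
    have hC_succ := (measBdd_certEquiv (P := P) (β := β) ht hW_sub).mono (ℱ.le (t + 1))
    have hmono := condExp_mono (m := ℱ t) integrable_utilSum1
      (hC_succ.comp (continuous_expUtility (β (t + 1)))).integrable (ih hW_sub hX_succ)
    have hrec := utilSum1_eq_add_condExp (P := P) (u := fun s => expUtility (α s)) htT.le
      (continuous_expUtility _) hXt
    have hcond :=
      condExp_expUtility_certEquiv_sub (P := P) (fun _ hr => (hβ.pos hα hr).ne') htT hW hXt
    filter_upwards [hrec, hmono, hcond] with ω hrec hmono hcond
    calc utilSum1 P ℱ (fun s => expUtility (α s)) t T X ω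
        ≤ expUtility (α t) (X t ω) +
            expUtility (β (t + 1)) (certEquiv P ℱ β T t W ω - X t ω) := by
          rw [hrec, ← hcond]
          gcongr
      _ ≤ expUtility (β t) (X t ω + (certEquiv P ℱ β T t W ω - X t ω)) :=
          expUtility_add_le (hα t) (hβ.pos hα ht) (hβ.inv_eq_inv_add_inv_succ htT) _ _
      _ = expUtility (β t) (certEquiv P ℱ β T t W ω) := by rw [add_sub_cancel]

lemma exists_isDiv1_utilSum1_expUtility_ae_eq (hα : ∀ s, 0 < α s)
    (hβ : IsAggregateRiskAversion α β T) (ht : t ≤ T) (hW : MeasBdd (ℱ T) W) :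
    ∃ X, IsDiv1 P ℱ t T W X ∧
      utilSum1 P ℱ (fun s => expUtility (α s)) t T X =ᵐ[P]
        fun ω => expUtility (β t) (certEquiv P ℱ β T t W ω) := by
  induction ht using Nat.decreasingInduction generalizing W with
  | self =>
    refine ⟨fun _ => W, ⟨fun s hs => ?_, by simp⟩, ?_⟩
    · rw [Finset.Icc_self, Finset.mem_singleton] at hs
      rwa [hs]
    · rw [utilSum1_self (continuous_expUtility _) hW, certEquiv_self, hβ.apply_last]
  | of_succ t ht ih =>
    have htT : t < T := ht
    let Y : Ω → ℝ := fun ω => β t * (α t)⁻¹ * certEquiv P ℱ β T t W ω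
    have hY : MeasBdd (ℱ t) Y := (measBdd_certEquiv htT.le hW).const_mul _
    obtain ⟨X, hX, hX_value⟩ := ih (hW.sub (hY.mono (ℱ.mono htT.le)))
    have hX_eq : ∀ s ∈ Finset.Icc (t + 1) T, X s = Function.update X t Y s := fun s hs =>
      (Function.update_of_ne (Nat.ne_of_gt (Finset.mem_Icc.mp hs).1) Y X).symm
    have hY_update : MeasBdd (ℱ t) (Function.update X t Y t) := by rwa [Function.update_self]
    refine ⟨Function.update X t Y, (isDiv1_iff_succ htT.le).mpr ⟨hY_update, ?_⟩, ?_⟩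
    · rw [Function.update_self]
      exact hX.congr hX_eq
    have hrec := utilSum1_eq_add_condExp (P := P) (u := fun s => expUtility (α s)) htT.le
      (continuous_expUtility _) hY_update
    rw [← utilSum1_congr hX_eq, Function.update_self] at hrec
    have hcond :=
      condExp_expUtility_certEquiv_sub (P := P) (fun _ hr => (hβ.pos hα hr).ne') htT hW hY
    filter_upwards [hrec, condExp_congr_ae (m := ℱ t) hX_value, hcond] with ω hrec hvalue hcond
    rw [hrec, hvalue, hcond]
    exact expUtility_mul_add_expUtility_sub (hα t) (hβ.pos hα ht) (hβ.inv_eq_inv_add_inv_succ htT) _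

lemma IsEssSupOf.ae_eq_expUtility_certEquiv (hα : ∀ s, 0 < α s)
    (hβ : IsAggregateRiskAversion α β T) (ht : t ≤ T) (hW : MeasBdd (ℱ T) W)
    (hV : IsEssSupOf P {g | ∃ X : ℕ → Ω → ℝ, IsDiv1 P ℱ t T W X ∧
      g = utilSum1 P ℱ (fun s => expUtility (α s)) t T X} V) :
    V =ᵐ[P] fun ω => expUtility (β t) (certEquiv P ℱ β T t W ω) := by
  obtain ⟨X, hX, hX_value⟩ := exists_isDiv1_utilSum1_expUtility_ae_eq (P := P) hα hβ ht hW
  refine (hV.2 _ ?_).antisymm (hX_value.symm.le.trans (hV.1 _ ⟨X, hX, rfl⟩))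
  rintro _ ⟨X', hX', rfl⟩
  exact utilSum1_expUtility_le hα hβ ht hW hX'

end Value

section Premium

variable {m0 : MeasurableSpace Ω} {P : Measure Ω} [IsFiniteMeasure P] {ℱ : Filtration ℕ m0}
  {β : ℕ → ℝ} {b : ℝ} {t T : ℕ} {K W G : Ω → ℝ} {U : (Ω → ℝ) → Ω → ℝ}

lemma value_zero_le_value_sub_iff (hβ : ∀ s ≤ T, β s ≠ 0) (hb : 0 < b) (ht : t ≤ T)
    (hU : ∀ W, MeasBdd (ℱ T) W → U W =ᵐ[P] fun ω => expUtility b (certEquiv P ℱ β T t W ω))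
    (hW : MeasBdd (ℱ T) W) (hK : MeasBdd (ℱ t) K) :
    U (fun _ => 0) ≤ᵐ[P] U (fun ω => K ω - W ω) ↔
      (fun ω => -certEquiv P ℱ β T t (fun ω => -W ω) ω) ≤ᵐ[P] K := by
  have hzero := certEquiv_of_measBdd (P := P) hβ ht (MeasBdd.const (m := ℱ t) 0)
  have hshift := certEquiv_add (P := P) hβ ht hW.neg hK
  simp only [neg_add_eq_sub] at hshift
  refine eventually_congr ?_
  filter_upwards [hU _ (MeasBdd.const 0), hU _ ((hK.mono (ℱ.mono ht)).sub hW), hzero, hshift]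
    with ω hU_zero hU_sub hzero hshift
  rw [hU_zero, hU_sub, hzero, hshift, (strictMono_expUtility hb).le_iff_le, neg_le_iff_add_nonneg']

lemma IsEssInfOf.ae_eq_neg_certEquiv (hβ : ∀ s ≤ T, β s ≠ 0) (hb : 0 < b) (ht : t ≤ T)
    (hU : ∀ W, MeasBdd (ℱ T) W → U W =ᵐ[P] fun ω => expUtility b (certEquiv P ℱ β T t W ω))
    (hW : MeasBdd (ℱ T) W)
    (hG : IsEssInfOf P {K | MeasBdd (ℱ t) K ∧ U (fun _ => 0) ≤ᵐ[P] U (fun ω => K ω - W ω)} G) :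
    G =ᵐ[P] fun ω => -certEquiv P ℱ β T t (fun ω => -W ω) ω := by
  have hC := (measBdd_certEquiv (P := P) (β := β) ht hW.neg).neg
  refine (hG.1 _ ⟨hC, ?_⟩).antisymm (hG.2 _ ?_)
  · exact (value_zero_le_value_sub_iff hβ hb ht hU hW hC).mpr EventuallyLE.rfl
  · rintro K ⟨hK, hK_le⟩
    exact (value_zero_le_value_sub_iff hβ hb ht hU hW hK).mp hK_le

end Premium

/-- Theorem 2.24, dynamic programming property: in the exponential case,
`H_t(Z) = H_t(H_{t+τ}(Z))` a.s. -/
theorem exponential_premium_dynamic_programming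
    {m0 : MeasurableSpace Ω} (P : Measure Ω) [IsProbabilityMeasure P]
    (ℱ : Filtration ℕ m0) (T : ℕ) (hT : 0 < T)
    (α : ℕ → ℝ) (hα : ∀ s, 0 < α s)
    (u : ℕ → ℝ → ℝ) (hu : ∀ s, u s = fun x => (α s)⁻¹ * (1 - Real.exp (-(α s) * x)))
    (β : ℕ → ℝ) (hβpos : ∀ r, r ≤ T → 0 < β r)
    (hβ : ∀ r, r ≤ T → (β r)⁻¹ = ∑ s ∈ Finset.Icc r T, (α s)⁻¹)
    (U : ℕ → (Ω → ℝ) → Ω → ℝ)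
    (hU : ∀ t, t ≤ T → ∀ W : Ω → ℝ, MeasBdd (ℱ T) W →
      IsEssSupOf P
        {g | ∃ X : ℕ → Ω → ℝ, IsDiv1 P ℱ t T W X ∧ g = utilSum1 P ℱ u t T X}
        (U t W))
    (H : ℕ → (Ω → ℝ) → Ω → ℝ)
    (hH : ∀ t, t ≤ T → ∀ W : Ω → ℝ, MeasBdd (ℱ T) W →
      IsEssInfOf P
        {K | MeasBdd (ℱ t) K ∧ U t (fun _ => 0) ≤ᵐ[P] U t (fun ω => K ω - W ω)}
        (H t W))
    -- `H` is chosen with regular versions, i.e. `H_t` maps `L^∞_T` into `L^∞_t`: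
    (hHreg : ∀ t, t ≤ T → ∀ W : Ω → ℝ, MeasBdd (ℱ T) W → MeasBdd (ℱ t) (H t W))
    (Z : Ω → ℝ) (hZ : MeasBdd (ℱ T) Z) :
    ∀ τ t : ℕ, 1 ≤ τ → τ ≤ T → t + τ ≤ T →
      H t Z =ᵐ[P] H t (H (t + τ) Z) := by
  obtain rfl : u = fun s => expUtility (α s) := funext hu
  have hβ_ne : ∀ s ≤ T, β s ≠ 0 := fun s hs => (hβpos s hs).ne'
  have hH_eq : ∀ t ≤ T, ∀ W, MeasBdd (ℱ T) W →
      H t W =ᵐ[P] fun ω => -certEquiv P ℱ β T t (fun ω => -W ω) ω := fun t ht W hW =>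
    (hH t ht W hW).ae_eq_neg_certEquiv hβ_ne (hβpos t ht) ht
      (fun V hV => (hU t ht V hV).ae_eq_expUtility_certEquiv hα hβ ht hV) hW
  intro τ t _ _ hr
  have ht : t ≤ T := (Nat.le_add_right t τ).trans hr
  have hHZ : MeasBdd (ℱ T) (H (t + τ) Z) := (hHreg _ hr Z hZ).mono (ℱ.mono hr)
  have hneg : (fun ω => -H (t + τ) Z ω) =ᵐ[P]
      certEquiv P ℱ β T (t + τ) (fun ω => -Z ω) := by
    filter_upwards [hH_eq (t + τ) hr Z hZ] with ω h
    rw [h, neg_neg]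
  have hcongr := certEquiv_congr_ae hβ_ne ht hHZ.neg
    ((measBdd_certEquiv hr hZ.neg).mono (ℱ.mono hr)) hneg
  have htower := certEquiv_certEquiv (P := P) hβ_ne (Nat.le_add_right t τ) hr hZ.neg
  filter_upwards [hH_eq t ht Z hZ, hH_eq t ht _ hHZ, hcongr, htower]
    with ω hH_Z hH_H hcongr htower
  rw [hH_Z, hH_H, hcongr, htower]
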